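/- Let l be a prime number, G a finite group possessing a normal subgroup A whose order is coprime to l and whose index in G is a power of l. Let Γ be a group and π : Γ → G a surjective group homomorphism whose kernel C is a finite abelian group in which every element satisfies x^l = 1, and assume that the F_l[G]-module structure on C given by conjugation is simple of F_l-dimension strictly greater than 1. Then any two sections of π are conjugate: if σ, σ' : G → Γ are group homomorphisms with π ∘ σ = id_G and π ∘ σ' = id_G, then there exists γ ∈ Γ such that σ'(g) = γ σ(g) γ⁻¹ for all g ∈ G. -/

import Mathlib

/-!
Two lifts of one homomorphism along `π` differ by a `1`-cocycle with values in `ker π`. Since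
`|A|` is prime to `l`, averaging makes this cocycle a coboundary on `A`, so after conjugating by
an element of `ker π` we may assume that `σ'` agrees with `σ` on `A`. As `A` is normal, the elements
`σ' g * (σ g)⁻¹` then lie in the normal subgroup `ker π ⊓ centralizer (π⁻¹ A)` of `Γ`, which is
trivial or all of `ker π`. In the second case `Γ` acts on `ker π` through the `l`-group `G ⧸ A` and
fixes a nontrivial element, so by simplicity `ker π` is central. But a central minimal normal
subgroup is cyclic, which for exponent `l` bounds its order by `l`.
-/

section Cocycles

open groupCohomology

variable {G M : Type*} [Group G] [Finite G] [CommGroup M] [MulDistribMulAction G M]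

lemma isMulCoboundary₁_pow_card {f : G → M} (hf : IsMulCocycle₁ f) :
    IsMulCoboundary₁ (f ^ Nat.card G) := by
  have := Fintype.ofFinite G
  refine ⟨(∏ h, f h)⁻¹, fun g => ?_⟩
  have hprod : ∏ h, f h = (g • ∏ h, f h) * f g ^ Nat.card G :=
    calc ∏ h, f h = ∏ h, f (g * h) := (Fintype.prod_equiv (Equiv.mulLeft g) _ _ fun _ => rfl).symm
      _ = ∏ h, g • f h * f g := Finset.prod_congr rfl fun h _ => hf g h
      _ = (g • ∏ h, f h) * f g ^ Nat.card G := by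
        rw [Finset.prod_mul_distrib, Finset.prod_const, Finset.card_univ, Finset.smul_prod',
          Nat.card_eq_fintype_card]
  rw [smul_inv', div_inv_eq_mul, inv_mul_eq_iff_eq_mul]
  exact hprod

lemma isMulCoboundary₁_of_coprime_card {n : ℕ} (hn : (Nat.card G).Coprime n) {f : G → M}
    (hf : IsMulCocycle₁ f) (hfn : ∀ g, f g ^ n = 1) : IsMulCoboundary₁ f := by
  obtain ⟨x, hx⟩ := isMulCoboundary₁_pow_card hf
  obtain ⟨a, b, hab⟩ := Nat.isCoprime_iff_coprime.mpr hn
  refine ⟨x ^ a, fun g => ?_⟩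
  calc g • x ^ a / x ^ a = (f g ^ Nat.card G) ^ a := by
        rw [smul_zpow', ← div_zpow, hx, Pi.pow_apply]
    _ = f g ^ (a * Nat.card G + b * n) := by
      rw [zpow_add, mul_comm a, mul_comm b, zpow_mul, zpow_mul, zpow_natCast, zpow_natCast, hfn,
        one_zpow, mul_one]
    _ = f g := by rw [hab, zpow_one]

end Cocycles

section Lifts

open scoped IsMulCommutative

variable {G Γ : Type*} [Group G] [Group Γ] {π : Γ →* G} [IsMulCommutative π.ker] {n : ℕ}

lemma exists_mem_ker_conj_of_comp_eq {K : Type*} [Group K] [Finite K]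
    (hK : (Nat.card K).Coprime n) (hexp : ∀ x ∈ π.ker, x ^ n = 1) {φ φ' : K →* Γ}
    (hφ : π.comp φ = π.comp φ') : ∃ γ ∈ π.ker, ∀ k, φ' k = γ * φ k * γ⁻¹ := by
  let _ : MulDistribMulAction K π.ker := .compHom _ ((MulAut.conjNormal : Γ →* MulAut π.ker).comp φ)
  have coe_smul (k : K) (x : π.ker) : ((k • x : π.ker) : Γ) = φ k * x * (φ k)⁻¹ :=
    MulAut.conjNormal_apply (φ k) x
  have mem_ker (k : K) : φ' k * (φ k)⁻¹ ∈ π.ker := by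
    rw [MonoidHom.mem_ker, map_mul, map_inv, mul_inv_eq_one]
    exact (DFunLike.congr_fun hφ k).symm
  let f (k : K) : π.ker := ⟨φ' k * (φ k)⁻¹, mem_ker k⟩
  have hf : groupCohomology.IsMulCocycle₁ f := fun g h => by
    rw [mul_comm, Subtype.ext_iff, Subgroup.coe_mul, coe_smul]
    simp only [f, map_mul]
    group
  obtain ⟨x, hx⟩ := isMulCoboundary₁_of_coprime_card hK hf
    fun k => Subtype.ext (hexp _ (mem_ker k))
  refine ⟨x⁻¹, inv_mem x.2, fun k => ?_⟩
  have hk : (x : Γ)⁻¹ * (φ k * x * (φ k)⁻¹) = φ' k * (φ k)⁻¹ := by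
    rw [← coe_smul, ← Subgroup.coe_inv, ← Subgroup.coe_mul, mul_comm, ← div_eq_mul_inv, hx]
  rw [inv_inv, eq_mul_inv_of_mul_eq hk.symm]
  group

end Lifts

section Sections

variable {G Γ : Type*} [Group G] [Group Γ]

lemma mul_inv_mem_centralizer_map {A : Subgroup G} [A.Normal] {φ φ' : G →* Γ}
    (h : ∀ a ∈ A, φ' a = φ a) (g : G) :
    φ' g * (φ g)⁻¹ ∈ Subgroup.centralizer (A.map φ : Set Γ) := by
  rintro _ ⟨a, ha, rfl⟩
  have hconj : φ' (g⁻¹ * a * g) = φ (g⁻¹ * a * g) := h _ (Subgroup.Normal.conj_mem' ‹_› a ha g)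
  calc φ a * (φ' g * (φ g)⁻¹) = φ' g * φ' (g⁻¹ * a * g) * (φ g)⁻¹ := by
        rw [← h a ha, ← map_mul, ← mul_assoc, ← map_mul]
        group
    _ = φ' g * (φ g)⁻¹ * φ a := by
        rw [hconj, map_mul, map_mul, map_inv]
        group

lemma comap_eq_map_sup_ker {π : Γ →* G} {σ : G →* Γ} (hσ : π.comp σ = MonoidHom.id G)
    (A : Subgroup G) : A.comap π = A.map σ ⊔ π.ker := by
  rw [← Subgroup.comap_map_eq, Subgroup.map_map, hσ, Subgroup.map_id]

variable {π : Γ →* G} [IsMulCommutative π.ker] {A : Subgroup G} [A.Normal] {σ σ' : G →* Γ}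

lemma mul_inv_mem_ker_inf_centralizer_comap (hσ : π.comp σ = MonoidHom.id G)
    (hσ' : π.comp σ' = MonoidHom.id G) (h : ∀ a ∈ A, σ' a = σ a) (g : G) :
    σ' g * (σ g)⁻¹ ∈ π.ker ⊓ Subgroup.centralizer (A.comap π : Set Γ) := by
  have hker : σ' g * (σ g)⁻¹ ∈ π.ker := by
    rw [MonoidHom.mem_ker, map_mul, map_inv, mul_inv_eq_one]
    exact DFunLike.congr_fun (hσ'.trans hσ.symm) g
  refine ⟨hker, ?_⟩
  rw [comap_eq_map_sup_ker hσ, Subgroup.sup_eq_closure, Subgroup.centralizer_closure]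
  rintro y (hy | hy)
  · exact mul_inv_mem_centralizer_map h g y hy
  · exact π.ker.le_centralizer hker y hy

lemma exists_mem_ker_conj_of_ker_inf_centralizer_eq_bot [Finite A] {n : ℕ}
    (hA : (Nat.card A).Coprime n) (hexp : ∀ x ∈ π.ker, x ^ n = 1)
    (hbot : π.ker ⊓ Subgroup.centralizer (A.comap π : Set Γ) = ⊥)
    (hσ : π.comp σ = MonoidHom.id G) (hσ' : π.comp σ' = MonoidHom.id G) :
    ∃ γ ∈ π.ker, ∀ g, σ' g = γ * σ g * γ⁻¹ := by
  obtain ⟨γ, hγ, hconj⟩ := exists_mem_ker_conj_of_comp_eq hA hexp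
    (φ := σ.comp A.subtype) (φ' := σ'.comp A.subtype)
    (by simp only [← MonoidHom.comp_assoc, hσ, hσ'])
  let τ : G →* Γ := (MulAut.conj γ).toMonoidHom.comp σ
  have hτ : π.comp τ = MonoidHom.id G := by
    rw [← hσ]
    ext g
    simp [τ, MonoidHom.mem_ker.mp hγ]
  refine ⟨γ, hγ, fun g => ?_⟩
  have hmem := mul_inv_mem_ker_inf_centralizer_comap hτ hσ' (fun a ha => hconj ⟨a, ha⟩) g
  rw [hbot, Subgroup.mem_bot, mul_inv_eq_one] at hmem
  exact hmem

end Sections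

lemma isPGroup_quotient_comap {G Γ : Type*} [Group G] [Group Γ] {p : ℕ} {A : Subgroup G}
    [A.Normal] (hA : IsPGroup p (G ⧸ A)) (π : Γ →* G) : IsPGroup p (Γ ⧸ A.comap π) :=
  hA.of_injective (QuotientGroup.map _ A π le_rfl) <| by
    rw [← MonoidHom.ker_eq_bot_iff, QuotientGroup.ker_map, QuotientGroup.map_mk'_self]

lemma inf_center_ne_bot_of_isPGroup_quotient {G : Type*} [Group G] {N : Subgroup G}
    [N.Normal] [Finite N] [Nontrivial N] {p : ℕ} [Fact p.Prime] (hN : IsPGroup p N)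
    {B : Subgroup G} [B.Normal] (hB : IsPGroup p (G ⧸ B))
    (hNB : N ≤ Subgroup.centralizer (B : Set G)) : N ⊓ Subgroup.center G ≠ ⊥ := by
  let ρ : G →* MulAut N := MulAut.conjNormal
  have hBρ : B ≤ ρ.ker := fun b hb => by
    ext x
    rw [MulAut.conjNormal_apply, hNB x.2 b hb, mul_inv_cancel_right, MulAut.one_apply]
  have hρ : IsPGroup p ρ.range :=
    hB.of_surjective (QuotientGroup.lift B ρ.rangeRestrict (by rwa [MonoidHom.ker_rangeRestrict]))
      (QuotientGroup.lift_surjective_of_surjective _ _ ρ.rangeRestrict_surjective _)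
  have hcard : p ∣ Nat.card N := hN.card_eq_or_dvd.resolve_left Finite.one_lt_card.ne'
  obtain ⟨z, hz, hz1⟩ := hρ.exists_fixed_point_of_prime_dvd_card_of_fixed_point N hcard
    (a := 1) fun r => smul_one r
  have hzcenter : (z : G) ∈ Subgroup.center G := Subgroup.mem_center_iff.mpr fun g =>
    mul_inv_eq_iff_eq_mul.mp (congrArg Subtype.val (hz ⟨ρ g, g, rfl⟩))
  exact fun h => hz1 (Subtype.ext ((Subgroup.eq_bot_iff_forall _).mp h z ⟨z.2, hzcenter⟩).symm)

lemma normal_of_le_center {G : Type*} [Group G] {H : Subgroup G} (hH : H ≤ Subgroup.center G) :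
    H.Normal where
  conj_mem x hx g := by
    rwa [Subgroup.mem_center_iff.mp (hH hx) g, mul_inv_cancel_right]

lemma card_dvd_of_le_center {G : Type*} [Group G] {N : Subgroup G}
    (hN : N ≤ Subgroup.center G)
    (hmin : ∀ H ≤ N, H.Normal → H = ⊥ ∨ H = N) {n : ℕ} (hexp : ∀ x ∈ N, x ^ n = 1) :
    Nat.card N ∣ n := by
  rcases N.bot_or_exists_ne_one with rfl | ⟨x, hx, hx1⟩
  · simp
  · have hle : Subgroup.zpowers x ≤ N := Subgroup.zpowers_le.mpr hx
    have hzpowers : Subgroup.zpowers x = N :=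
      (hmin _ hle (normal_of_le_center (hle.trans hN))).resolve_left
        (Subgroup.zpowers_ne_bot.mpr hx1)
    rw [← hzpowers, Nat.card_zpowers]
    exact orderOf_dvd_of_pow_eq_one (hexp x hx)

theorem stmt_3_general {l : ℕ} [hl : Fact l.Prime] {G Γ : Type*} [Group G] [Group Γ]
    {A : Subgroup G} [A.Normal] (hA : (Nat.card A).Coprime l) (hquot : IsPGroup l (G ⧸ A))
    {π : Γ →* G} [Finite π.ker] [IsMulCommutative π.ker] (hexp : ∀ x ∈ π.ker, x ^ l = 1)
    (hcentral : ¬π.ker ≤ Subgroup.center Γ)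
    (hsimple : ∀ H ≤ π.ker, H.Normal → H = ⊥ ∨ H = π.ker)
    {σ σ' : G →* Γ} (hσ : π.comp σ = MonoidHom.id G) (hσ' : π.comp σ' = MonoidHom.id G) :
    ∃ γ ∈ π.ker, ∀ g, σ' g = γ * σ g * γ⁻¹ := by
  have : Finite A := Nat.finite_of_card_ne_zero fun h =>
    hl.out.ne_one ((Nat.coprime_zero_left l).mp (h ▸ hA))
  suffices hbot : π.ker ⊓ Subgroup.centralizer (A.comap π : Set Γ) = ⊥ from
    exists_mem_ker_conj_of_ker_inf_centralizer_eq_bot hA hexp hbot hσ hσ'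
  refine (hsimple _ inf_le_left inferInstance).resolve_right fun hcentralizer => hcentral ?_
  have : Nontrivial π.ker := (Subgroup.nontrivial_iff_ne_bot _).mpr fun h =>
    hcentral (h ▸ bot_le)
  have hker : IsPGroup l π.ker := fun x => ⟨1, Subtype.ext (by simpa using hexp x x.2)⟩
  have hcenter : π.ker ⊓ Subgroup.center Γ ≠ ⊥ := inf_center_ne_bot_of_isPGroup_quotient hker
    (isPGroup_quotient_comap hquot π) (inf_eq_left.mp hcentralizer)
  exact inf_eq_left.mp ((hsimple _ inf_le_left inferInstance).resolve_left hcenter)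

/-- In the situation of the previous statement (kernel `C = ker π` a finite abelian group of
exponent dividing `l`, simple of `𝔽_l`-dimension `> 1` as `𝔽_l[G]`-module under conjugation),
any two sections of `π` are conjugate by an element of `Γ`. -/
theorem stmt_3 (l : ℕ) [hl : Fact l.Prime] (G : Type) [Group G] [Finite G]
    (A : Subgroup G) [A.Normal] (hA : Nat.Coprime (Nat.card A) l)
    (hidx : ∃ k : ℕ, A.index = l ^ k)
    (Γ : Type) [Group Γ] (π : Γ →* G) (hπ : Function.Surjective π)
    [Finite π.ker]
    (hab : ∀ x y : Γ, x ∈ π.ker → y ∈ π.ker → x * y = y * x)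
    (hexp : ∀ x : Γ, x ∈ π.ker → x ^ l = 1)
    (hdim : ∃ d : ℕ, Nat.card π.ker = l ^ d ∧ 1 < d)
    (hsimple : ∀ H : Subgroup Γ, H ≤ π.ker →
      (∀ γ : Γ, ∀ x ∈ H, γ * x * γ⁻¹ ∈ H) → H = ⊥ ∨ H = π.ker)
    (σ σ' : G →* Γ) (hσ : π.comp σ = MonoidHom.id G) (hσ' : π.comp σ' = MonoidHom.id G) :
    ∃ γ : Γ, ∀ g : G, σ' g = γ * σ g * γ⁻¹ := by
  have : IsMulCommutative π.ker := .of_comm fun x y => Subtype.ext (hab x y x.2 y.2)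
  have hmin : ∀ H ≤ π.ker, H.Normal → H = ⊥ ∨ H = π.ker := fun H hle hH =>
    hsimple H hle fun γ x hx => hH.conj_mem x hx γ
  obtain ⟨k, hk⟩ := hidx
  obtain ⟨d, hd, hd1⟩ := hdim
  have hcard : ¬Nat.card π.ker ∣ l :=
    hd ▸ Nat.not_dvd_of_pos_of_lt hl.out.pos (lt_self_pow₀ hl.out.one_lt hd1)
  obtain ⟨γ, -, hγ⟩ := stmt_3_general hA (.of_card hk) hexp
    (fun hcentral => hcard (card_dvd_of_le_center hcentral hmin hexp)) hmin hσ hσ'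
  exact ⟨γ, hγ⟩
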